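/- Let μ be a nonzero l-regular partition with Mullineux components μ^1, μ^2, …, μ^t. Then ℓ(Mull(μ)) = ℓ(Mull(μ^1)) + ℓ(Mull(μ^2)) + … + ℓ(Mull(μ^t)). -/

import Mathlib

noncomputable section

/-- `p : ℕ → ℕ` represents the partition `λ` with `p i = λ_{i+1}` (0-indexed parts):
a weakly decreasing, eventually zero sequence. -/
def IsPartition (p : ℕ → ℕ) : Prop :=
  (∀ i j, i ≤ j → p j ≤ p i) ∧ ∃ N, ∀ i, N ≤ i → p i = 0

/-- `ℓ(λ)`, the number of nonzero parts. -/
def plen (p : ℕ → ℕ) : ℕ := sInf {N | p N = 0}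

/-- the degree (number of boxes) of the partition. -/
def pdeg (p : ℕ → ℕ) : ℕ := ∑ i ∈ Finset.range (plen p), p i

/-- `λ` is `l`-regular: no `l` consecutive parts are equal and nonzero. -/
def IsLRegular (l : ℕ) (p : ℕ → ℕ) : Prop :=
  ∀ i, p i ≠ 0 → p (i + l - 1) ≠ p i

/-- `λ` is `l`-restricted: `λ_i - λ_{i+1} < l` for all `i`. -/
def IsLRestricted (l : ℕ) (p : ℕ → ℕ) : Prop :=
  ∀ i, p i - p (i + 1) < l

/-- the transpose (conjugate) partition. -/
def conjP (p : ℕ → ℕ) : ℕ → ℕ :=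
  fun j => ((Finset.range (plen p)).filter fun i => j < p i).card

/-- the minimal `h ≥ 1` with `λ_1 - λ_{h+1} + h ≥ l`: when `e(λ) > l`, the first
`l`-segment of the `l`-edge lies in rows `1, …, h`. -/
def firstSeg (l : ℕ) (p : ℕ → ℕ) : ℕ := sInf {h | 1 ≤ h ∧ l ≤ p 0 - p h + h}

/-- removal of the `l`-edge (with fuel): if `e(λ) ≤ l` the whole edge is removed,
otherwise the first `l`-segment is removed from rows `1, …, h` (`h = firstSeg`) and one
recurses on `(λ_{h+1}, λ_{h+2}, …)`. -/
def removeLEdgeAux (l : ℕ) : ℕ → (ℕ → ℕ) → ℕ → ℕ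
  | 0, _ => fun _ => 0
  | n + 1, p =>
    if p 0 = 0 then fun _ => 0
    else if p 0 + plen p - 1 ≤ l then fun i => p (i + 1) - 1
    else fun i =>
      if i + 1 < firstSeg l p then p (i + 1) - 1
      else if i + 1 = firstSeg l p then p 0 + firstSeg l p - 1 - l
      else removeLEdgeAux l n (fun j => p (j + firstSeg l p)) (i - firstSeg l p)

/-- the partition obtained by removing the `l`-edge of `λ`. -/
def removeLEdge (l : ℕ) (p : ℕ → ℕ) : ℕ → ℕ := removeLEdgeAux l (plen p) p

/-- `e_l(λ)`, the number of nodes of the `l`-edge. -/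
def elen (l : ℕ) (p : ℕ → ℕ) : ℕ := pdeg p - pdeg (removeLEdge l p)

/-- the length of `Mull(λ)` prescribed by the defining recursion of the Mullineux map. -/
def mullLen (l : ℕ) (p : ℕ → ℕ) : ℕ :=
  if l ∣ elen l p then elen l p - plen p else elen l p - plen p + 1

/-- the Mullineux map (with fuel): `Mull(0) = 0` and, for `λ ≠ 0` `l`-regular with `ν`
obtained from `λ` by removing the `l`-edge, `Mull(λ)` is the unique `l`-regular partition
whose `l`-edge removal leaves `Mull(ν)` and whose length is `e_l(λ) - ℓ(λ)` if
`l ∣ e_l(λ)` and `e_l(λ) - ℓ(λ) + 1` otherwise. -/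
def mullAux (l : ℕ) : ℕ → (ℕ → ℕ) → ℕ → ℕ
  | 0, _ => fun _ => 0
  | n + 1, p =>
    if p 0 = 0 then fun _ => 0
    else
      Classical.epsilon fun μ : ℕ → ℕ =>
        IsPartition μ ∧ IsLRegular l μ ∧
          removeLEdge l μ = mullAux l n (removeLEdge l p) ∧ plen μ = mullLen l p

/-- the Mullineux map. -/
def mull (l : ℕ) (p : ℕ → ℕ) : ℕ → ℕ := mullAux l (pdeg p) p

/-- the list of Mullineux components (with fuel). -/
def mullCompsAux (l : ℕ) : ℕ → (ℕ → ℕ) → List (ℕ → ℕ)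
  | 0, _ => []
  | n + 1, p =>
    if p 0 = 0 then []
    else if elen l p ≤ l then [p]
    else (fun i => if i < firstSeg l p then p i else 0) ::
      mullCompsAux l n (fun j => p (j + firstSeg l p))

/-- the Mullineux components of `λ`. -/
def mullComps (l : ℕ) (p : ℕ → ℕ) : List (ℕ → ℕ) := mullCompsAux l (plen p) p

/-- edge `l`-connectedness (with fuel): consecutive Mullineux components `α, ρ` satisfy
`α_1 - ρ_1 + ℓ(α) = l`. -/
def edgeConnAux (l : ℕ) : ℕ → (ℕ → ℕ) → Prop
  | 0, _ => True
  | n + 1, p =>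
    if elen l p ≤ l then True
    else p 0 + firstSeg l p = l + p (firstSeg l p) ∧
      edgeConnAux l n fun j => p (j + firstSeg l p)

/-- `λ` is edge `l`-connected. -/
def EdgeLConnected (l : ℕ) (p : ℕ → ℕ) : Prop := edgeConnAux l (plen p) p

/-- the node `(i+1, λ_{i+1})` (in row `i+1`, 1-indexed) is a removable node. -/
def Removable (p : ℕ → ℕ) (i : ℕ) : Prop := p (i + 1) < p i

/-- removal of the removable node in row `i+1`. -/
def removeNode (p : ℕ → ℕ) (i : ℕ) : ℕ → ℕ := fun k => if k = i then p i - 1 else p k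

/-- there is an addable node `(i+1, λ_{i+1} + 1)` in row `i+1` (1-indexed). -/
def Addable (p : ℕ → ℕ) (i : ℕ) : Prop := i ≤ plen p ∧ (i = 0 ∨ p i < p (i - 1))

/-- the removable node in row `i+1` is suitable: its residue (mod `l`) differs from the
residue of every lower addable node. -/
def Suitable (l : ℕ) (p : ℕ → ℕ) (i : ℕ) : Prop :=
  Removable p i ∧ ∀ j, i < j → Addable p j →
    ¬ ((p j : ℤ) - (j : ℤ) ≡ (p i : ℤ) - (i : ℤ) - 1 [ZMOD (l : ℤ)])

/-- the removable node in row `i+1` is co-suitable: its transpose node is a suitable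
node of the transpose partition. -/
def CoSuitable (l : ℕ) (p : ℕ → ℕ) (i : ℕ) : Prop :=
  Removable p i ∧ Suitable l (conjP p) (p i - 1)

/-- `Φ_m`: partitions with at most `m` parts and `λ_1 - λ_m ≤ l - m`. -/
def Phi (l m : ℕ) : Set (ℕ → ℕ) :=
  {p | IsPartition p ∧ plen p ≤ m ∧ p 0 - p (m - 1) ≤ l - m}

/-- `λ` is `m`-distinguished: `λ = λ⁰ + lλ̄` with
`λ⁰ = ((l-m)^k, a_1, …, a_m)`, `l - m > a_1 ≥ … ≥ a_m ≥ 0`, and `λ̄` a partition with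
`λ̄_1 ≤ m - 1`. -/
def IsDistinguished (l m : ℕ) (p : ℕ → ℕ) : Prop :=
  ∃ (k : ℕ) (a : ℕ → ℕ) (pb : ℕ → ℕ),
    IsPartition pb ∧ pb 0 < m ∧
    (∀ i j, i ≤ j → a j ≤ a i) ∧ a 0 < l - m ∧ (∀ i, m ≤ i → a i = 0) ∧
    ∀ i, p i = (if i < k then l - m else a (i - k)) + l * pb i

/-- `q` is obtained from `p` by removing a skew `l`-hook (spanning rows `a+1, …, b+1`,
1-indexed). -/
def IsHookRemoval (l : ℕ) (p q : ℕ → ℕ) : Prop :=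
  IsPartition q ∧ ∃ a b : ℕ, a ≤ b ∧
    (∀ i, i < a → q i = p i) ∧
    (∀ i, a ≤ i → i < b → q i + 1 = p (i + 1)) ∧
    q b + l = p a + (b - a) ∧
    ∀ i, b < i → q i = p i

/-- `q` is the `l`-core of `p`: obtained by repeatedly removing skew `l`-hooks until
none remain. -/
def IsCoreOf (l : ℕ) (p q : ℕ → ℕ) : Prop :=
  Relation.ReflTransGen (fun x y => IsHookRemoval l x y) p q ∧ ∀ r, ¬ IsHookRemoval l q r

/-- the `l`-core of `p`. -/
def lCore (l : ℕ) (p : ℕ → ℕ) : ℕ → ℕ := Classical.epsilon (IsCoreOf l p)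

/-! Read the `l`-edge of `p` row by row. If the `l`-segment through row `i` starts in row `j`, put
`s i = p j + (i - j)`; a new segment starts in row `i + 1` exactly when `l + p (i + 1) ≤ s i + 1`,
and row `i` of the partition left after removing the `l`-edge is `max (s i - l) (p (i + 1) - 1)`.
If `N i` is the number of segments finished above row `i`, the prescribed length `mullLen l p` is
the constant value of `l * N i + s i - i` for `i` beyond the last row. Hence splitting off the first
`l`-segment, which occupies `h` rows, changes `mullLen` by `l - h`, and `mullLen` is additive over
the Mullineux components.

It remains to see that the Mullineux map attains its prescribed lengths. The pairs `(N i, s i)` of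
`p` and of the partition `v` left after removing its `l`-edge interlace, so that
`mullLen l v ≤ mullLen l p ≤ mullLen l v + l`; and every `l`-regular `v` arises by removing the
`l`-edge from an `l`-regular partition of any length between `ℓ(v)` and `ℓ(v) + l`, which is built
by adding one row at a time on top. -/

section

variable {l h i n : ℕ} {p q : ℕ → ℕ}

/-! ### Partitions -/

namespace IsPartition

theorem antitone (hp : IsPartition p) : Antitone p := fun i j hij => hp.1 i j hij

theorem of_antitone (hp : Antitone p) (hn : p n = 0) : IsPartition p :=
  ⟨fun _ _ hij => hp hij, n, fun _ hi => Nat.eq_zero_of_le_zero (hn ▸ hp hi)⟩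

theorem zero : IsPartition fun _ => 0 := of_antitone (n := 0) antitone_const rfl

theorem eq_zero_iff_plen_le (hp : IsPartition p) : p i = 0 ↔ plen p ≤ i := by
  obtain ⟨N, hN⟩ := hp.2
  refine ⟨fun hi => Nat.sInf_le hi, fun hi => ?_⟩
  have hplen : p (plen p) = 0 := Nat.sInf_mem (s := {N | p N = 0}) ⟨N, hN N le_rfl⟩
  exact Nat.eq_zero_of_le_zero (hplen ▸ hp.antitone hi)

theorem apply_plen (hp : IsPartition p) : p (plen p) = 0 := hp.eq_zero_iff_plen_le.2 le_rfl

theorem plen_eq_of (hp : IsPartition p) (hn : p n = 0) (hpos : ∀ i < n, p i ≠ 0) : plen p = n :=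
  le_antisymm (hp.eq_zero_iff_plen_le.1 hn) (not_lt.1 fun hlt => hpos _ hlt hp.apply_plen)

theorem plen_eq_zero (hp : IsPartition p) (h0 : p 0 = 0) : plen p = 0 :=
  Nat.le_zero.1 (hp.eq_zero_iff_plen_le.1 h0)

theorem pdeg_eq_sum (hp : IsPartition p) (hn : p n = 0) :
    pdeg p = ∑ i ∈ Finset.range n, p i := by
  refine Finset.sum_subset (Finset.range_mono (hp.eq_zero_iff_plen_le.1 hn)) fun i _ hi => ?_
  exact hp.eq_zero_iff_plen_le.2 (by simpa using hi)

theorem eq_zero (hp : IsPartition p) (h0 : p 0 = 0) : p = fun _ => 0 :=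
  funext fun i => Nat.eq_zero_of_le_zero (h0 ▸ hp.antitone i.zero_le)

theorem shift (hp : IsPartition p) (h : ℕ) : IsPartition fun i => p (i + h) := by
  refine of_antitone (n := plen p) (fun i j hij => hp.antitone (by omega)) ?_
  exact hp.eq_zero_iff_plen_le.2 (by omega)

theorem truncate (hp : Antitone p) (h : ℕ) : IsPartition fun i => if i < h then p i else 0 := by
  refine of_antitone (n := h) (fun i j hij => ?_) (if_neg (lt_irrefl h))
  have hanti := hp hij
  split_ifs <;> omega

end IsPartition

namespace IsLRegular

theorem zero (l : ℕ) : IsLRegular l fun _ => 0 := fun _ hi => absurd rfl hi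

theorem shift (hr : IsLRegular l p) (hl : 0 < l) (h : ℕ) : IsLRegular l fun i => p (i + h) := by
  intro i hi
  convert hr (i + h) hi using 2
  omega

theorem truncate (hr : IsLRegular l p) (h : ℕ) :
    IsLRegular l fun i => if i < h then p i else 0 := by
  intro i hi
  have hih : i < h := by_contra fun hih => hi (if_neg hih)
  simp only [if_pos hih] at hi ⊢
  split_ifs
  · exact hr i hi
  · exact hi.symm

end IsLRegular

/-! ### The segments of the `l`-edge, row by row -/

/-- If the `l`-segment through row `i` starts in row `j`, this is `p j + (i - j)`, the size of the
edge of the partition formed by rows `j, …, i`. Rows are indexed from `0`, and the segments are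
continued through the empty rows below `p`. -/
def segSpan (l : ℕ) (p : ℕ → ℕ) : ℕ → ℕ
  | 0 => p 0
  | i + 1 => if l + p (i + 1) ≤ segSpan l p i + 1 then p (i + 1) else segSpan l p i + 1

/-- The index, starting from `0`, of the `l`-segment through row `i`, with the conventions of
`segSpan`. -/
def segIndex (l : ℕ) (p : ℕ → ℕ) : ℕ → ℕ
  | 0 => 0
  | i + 1 => if l + p (i + 1) ≤ segSpan l p i + 1 then segIndex l p i + 1 else segIndex l p i

theorem seg_succ_of_le (hi : l + p (i + 1) ≤ segSpan l p i + 1) :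
    segSpan l p (i + 1) = p (i + 1) ∧ segIndex l p (i + 1) = segIndex l p i + 1 :=
  ⟨if_pos hi, if_pos hi⟩

theorem seg_succ_of_lt (hi : segSpan l p i + 1 < l + p (i + 1)) :
    segSpan l p (i + 1) = segSpan l p i + 1 ∧ segIndex l p (i + 1) = segIndex l p i :=
  ⟨if_neg hi.not_ge, if_neg hi.not_ge⟩

theorem segSpan_lt (hl : 0 < l) (p : ℕ → ℕ) (i : ℕ) : segSpan l p i < l + p i := by
  cases i with
  | zero => simpa [segSpan] using hl
  | succ i => unfold segSpan; split_ifs <;> omega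

theorem le_segSpan (hp : Antitone p) (i : ℕ) : p i ≤ segSpan l p i := by
  induction i with
  | zero => rfl
  | succ i ih =>
    have hanti := hp (Nat.le_add_right i 1)
    unfold segSpan
    split_ifs <;> omega

theorem segSpan_le (hp : Antitone p) (i : ℕ) : segSpan l p i ≤ p 0 + i := by
  induction i with
  | zero => rfl
  | succ i ih =>
    have hanti := hp (i + 1).zero_le
    unfold segSpan
    split_ifs <;> omega

theorem segSpan_add_eq_or_lt {c d : ℕ} (hc : ∀ j, 0 < j → j ≤ d → p (i + j) = c) :
    segSpan l p (i + d) = segSpan l p i + d ∨ segSpan l p (i + d) < c + d := by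
  induction d with
  | zero => exact Or.inl rfl
  | succ d ih =>
    have hprev := ih fun j hj hjd => hc j hj (by omega)
    have hlast := hc (d + 1) d.succ_pos le_rfl
    rw [← add_assoc] at hlast
    rw [← add_assoc, segSpan]
    split_ifs <;> omega

theorem seg_add (h0 : segSpan l p h = q 0) (hpq : ∀ i, p (h + i + 1) = q (i + 1)) (i : ℕ) :
    segSpan l p (h + i) = segSpan l q i ∧
      segIndex l p (h + i) = segIndex l p h + segIndex l q i := by
  induction i with
  | zero => exact ⟨h0, rfl⟩
  | succ i ih =>
    rw [← add_assoc, segSpan, segIndex, segSpan, segIndex, hpq, ih.1, ih.2]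
    split_ifs <;> simp [add_assoc]

theorem seg_of_lt (hlt : ∀ j < h, p 0 + j < l + p j) (i : ℕ) (hi : i < h) :
    segSpan l p i = p 0 + i ∧ segIndex l p i = 0 := by
  induction i with
  | zero => exact ⟨rfl, rfl⟩
  | succ i ih =>
    obtain ⟨hspan, hindex⟩ := ih (by omega)
    have hi' := hlt (i + 1) hi
    obtain ⟨hspan', hindex'⟩ := seg_succ_of_lt (l := l) (p := p) (i := i) (by omega)
    omega

/-- `h` is the number of rows of the first `l`-segment. -/
theorem seg_shift (hl : 0 < l) (hle : l + p h ≤ p 0 + h) (hlt : ∀ j < h, p 0 + j < l + p j)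
    (i : ℕ) :
    segSpan l p (h + i) = segSpan l (fun j => p (j + h)) i ∧
      segIndex l p (h + i) = 1 + segIndex l (fun j => p (j + h)) i := by
  obtain ⟨m, rfl⟩ : ∃ m, h = m + 1 := Nat.exists_eq_succ_of_ne_zero (by rintro rfl; omega)
  obtain ⟨hspan, hindex⟩ := seg_of_lt hlt m m.lt_succ_self
  obtain ⟨hspan', hindex'⟩ := seg_succ_of_le (l := l) (p := p) (i := m) (by omega)
  have hseg := seg_add (q := fun j => p (j + (m + 1))) (hspan'.trans (by simp))
    (fun i => by congr 1; omega) i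
  rwa [hindex', hindex] at hseg

theorem firstSeg_spec (hl : 0 < l) (hp : Antitone p) :
    0 < firstSeg l p ∧ l + p (firstSeg l p) ≤ p 0 + firstSeg l p := by
  obtain ⟨hpos, hle⟩ : 1 ≤ firstSeg l p ∧ l ≤ p 0 - p (firstSeg l p) + firstSeg l p :=
    Nat.sInf_mem (s := {h | 1 ≤ h ∧ l ≤ p 0 - p h + h}) ⟨l, hl, by omega⟩
  have hanti := hp (firstSeg l p).zero_le
  exact ⟨hpos, by omega⟩

theorem lt_of_lt_firstSeg (hl : 0 < l) (hp : Antitone p) (j : ℕ) (hj : j < firstSeg l p) :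
    p 0 + j < l + p j := by
  have hnot : ¬(1 ≤ j ∧ l ≤ p 0 - p j + j) := Nat.notMem_of_lt_sInf hj
  have hanti := hp j.zero_le
  rcases Nat.eq_zero_or_pos j with rfl | hpos <;> omega

/-! ### Removing the `l`-edge -/

theorem removeLEdgeAux_apply (hl : 0 < l) (hp : IsPartition p) (hn : p n = 0) (i : ℕ) :
    removeLEdgeAux l n p i = max (segSpan l p i - l) (p (i + 1) - 1) := by
  have hspan := segSpan_lt hl p i
  induction n generalizing p i with
  | zero =>
    simp only [hp.eq_zero hn, removeLEdgeAux] at hspan ⊢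
    omega
  | succ n ih =>
    unfold removeLEdgeAux
    split_ifs with h0 he
    · simp only [hp.eq_zero h0] at hspan ⊢
      omega
    · have hle := segSpan_le (l := l) hp.antitone i
      dsimp only
      by_cases hi : p i = 0
      · have hanti := hp.antitone (Nat.le_add_right i 1)
        omega
      · have hlen : i < plen p := not_le.1 (mt hp.eq_zero_iff_plen_le.2 hi)
        omega
    · obtain ⟨hpos, hfirst⟩ := firstSeg_spec hl hp.antitone
      have hlt := lt_of_lt_firstSeg hl hp.antitone
      dsimp only
      generalize firstSeg l p = h at *
      rcases lt_or_ge i h with hi | hi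
      · have hspan := (seg_of_lt hlt i hi).1
        split_ifs with hi' hi'
        · have hlt' := hlt _ hi'
          omega
        · subst hi'
          omega
        · omega
      · obtain ⟨k, rfl⟩ := Nat.exists_eq_add_of_le hi
        have hn' : p (n + h) = 0 := Nat.eq_zero_of_le_zero (hn ▸ hp.antitone (by omega))
        rw [if_neg (by omega), if_neg (by omega), Nat.add_sub_cancel_left,
          ih (hp.shift h) hn' k (segSpan_lt hl _ k), (seg_shift hl hfirst hlt k).1]
        congr 3
        omega

theorem removeLEdge_apply (hl : 0 < l) (hp : IsPartition p) (i : ℕ) :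
    removeLEdge l p i = max (segSpan l p i - l) (p (i + 1) - 1) :=
  removeLEdgeAux_apply hl hp hp.apply_plen i

theorem removeLEdge_le (hl : 0 < l) (hp : IsPartition p) (i : ℕ) :
    removeLEdge l p i ≤ p i - 1 := by
  have hspan := segSpan_lt hl p i
  have hanti := hp.antitone (Nat.le_add_right i 1)
  rw [removeLEdge_apply hl hp]
  omega

theorem sub_one_le_removeLEdge (hl : 0 < l) (hp : IsPartition p) (i : ℕ) :
    p (i + 1) - 1 ≤ removeLEdge l p i :=
  removeLEdge_apply hl hp i ▸ le_max_right _ _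

theorem segSpan_le_removeLEdge (hl : 0 < l) (hp : IsPartition p) (i : ℕ) :
    segSpan l p i ≤ l + removeLEdge l p i := by
  rw [removeLEdge_apply hl hp]
  omega

theorem removeLEdge_eq_zero (hl : 0 < l) (hp : IsPartition p) (hi : p i = 0) :
    removeLEdge l p i = 0 := by
  have hle := removeLEdge_le hl hp i
  omega

theorem isPartition_removeLEdge (hl : 0 < l) (hp : IsPartition p) :
    IsPartition (removeLEdge l p) := by
  refine .of_antitone (n := plen p) (antitone_nat_of_succ_le fun i => ?_)
    (removeLEdge_eq_zero hl hp hp.apply_plen)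
  exact (removeLEdge_le hl hp (i + 1)).trans (sub_one_le_removeLEdge hl hp i)

/-- If rows `i, …, i + l - 1` were left with equal length `m ≠ 0`, then rows `i + 1, …, i + l - 1`
of `p` would have length `m + 1`, and `segSpan` would grow by one from each row to the next to reach
`m + l`. So it would be `m + 1` in row `i`, making that row of `p` equal to the following ones. -/
theorem isLRegular_removeLEdge (hl : 2 ≤ l) (hp : IsPartition p) (hr : IsLRegular l p) :
    IsLRegular l (removeLEdge l p) := by
  intro i hi heq
  have hl' : 0 < l := by omega
  obtain ⟨d, rfl⟩ : ∃ d, l = d + 1 := ⟨l - 1, by omega⟩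
  rw [show i + (d + 1) - 1 = i + d by omega] at heq
  have hreg : ∀ j, p j ≠ 0 → p (j + d) ≠ p j := hr
  set m := removeLEdge (d + 1) p i
  have hrow : ∀ j, 0 < j → j ≤ d → p (i + j) = m + 1 := by
    intro j hj hjd
    have hupper := sub_one_le_removeLEdge hl' hp i
    have hlower := removeLEdge_le hl' hp (i + d)
    have h1 := hp.antitone (show i + 1 ≤ i + j by omega)
    have h2 := hp.antitone (show i + j ≤ i + d by omega)
    omega
  have hlast : segSpan (d + 1) p (i + d) = m + (d + 1) := by
    have hend := hreg (i + 1) (by rw [hrow 1] <;> omega)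
    rw [show i + 1 + d = i + d + 1 by omega, hrow 1 one_pos (by omega)] at hend
    have hd := hrow d (by omega) le_rfl
    have happly := removeLEdge_apply hl' hp (i + d)
    omega
  have hspan := segSpan_add_eq_or_lt (l := d + 1) hrow
  have hle := le_segSpan (l := d + 1) hp.antitone i
  have hd := hrow d (by omega) le_rfl
  have hanti := hp.antitone (show i ≤ i + d by omega)
  exact hreg i (by omega) (by omega)

/-! ### The length prescribed by the Mullineux recursion -/

theorem sum_removeLEdge_add (hl : 0 < l) (hp : IsPartition p) (hn : p n ≠ 0) :
    ∑ i ∈ Finset.range n, removeLEdge l p i + l * segIndex l p n + segSpan l p n =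
      ∑ i ∈ Finset.range (n + 1), p i := by
  induction n with
  | zero => simp [segIndex, segSpan]
  | succ n ih =>
    have hanti := hp.antitone (Nat.le_add_right n 1)
    have hprev := ih (by omega)
    have happly := removeLEdge_apply hl hp n
    rw [Finset.sum_range_succ, Finset.sum_range_succ _ (n + 1)]
    rcases le_or_gt (l + p (n + 1)) (segSpan l p n + 1) with hstart | hstart
    · rw [(seg_succ_of_le hstart).1, (seg_succ_of_le hstart).2, mul_add_one]
      omega
    · rw [(seg_succ_of_lt hstart).1, (seg_succ_of_lt hstart).2]
      omega

theorem pdeg_removeLEdge_add_plen_le (hl : 0 < l) (hp : IsPartition p) :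
    pdeg (removeLEdge l p) + plen p ≤ pdeg p := by
  rw [(isPartition_removeLEdge hl hp).pdeg_eq_sum (removeLEdge_eq_zero hl hp hp.apply_plen),
    hp.pdeg_eq_sum hp.apply_plen]
  calc ∑ i ∈ Finset.range (plen p), removeLEdge l p i + plen p
      = ∑ i ∈ Finset.range (plen p), (removeLEdge l p i + 1) := by simp [Finset.sum_add_distrib]
    _ ≤ ∑ i ∈ Finset.range (plen p), p i := Finset.sum_le_sum fun i hi => by
      have hpos : p i ≠ 0 := mt hp.eq_zero_iff_plen_le.1 (not_le.2 (Finset.mem_range.1 hi))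
      have hle := removeLEdge_le hl hp i
      omega

theorem plen_le_elen (hl : 0 < l) (hp : IsPartition p) : plen p ≤ elen l p :=
  Nat.le_sub_of_add_le' (pdeg_removeLEdge_add_plen_le hl hp)

theorem elen_eq (hl : 0 < l) (hp : IsPartition p) (hn : plen p = n + 1) :
    elen l p = l * segIndex l p n + min (segSpan l p n) l := by
  have hend : p (n + 1) = 0 := hn ▸ hp.apply_plen
  have hpos : p n ≠ 0 := mt hp.eq_zero_iff_plen_le.1 (by omega)
  have hsum := sum_removeLEdge_add hl hp hpos
  have happly := removeLEdge_apply hl hp n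
  rw [elen, hp.pdeg_eq_sum hend, (isPartition_removeLEdge hl hp).pdeg_eq_sum
    (removeLEdge_eq_zero hl hp hend), Finset.sum_range_succ (removeLEdge l p)]
  omega

theorem mullLen_add_plen (hl : 0 < l) (hp : IsPartition p) :
    mullLen l p + plen p = l * segIndex l p (plen p) + segSpan l p (plen p) := by
  have hle := plen_le_elen hl hp
  unfold mullLen
  rcases hlen : plen p with _ | n
  · have hdeg : pdeg p = 0 := by simp [pdeg, hlen]
    have h0 : p 0 = 0 := hlen ▸ hp.apply_plen
    simp [elen, hdeg, segIndex, segSpan, h0]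
  · have hend : p (n + 1) = 0 := hlen ▸ hp.apply_plen
    have hpos : p n ≠ 0 := mt hp.eq_zero_iff_plen_le.1 (by omega)
    have hspan := le_segSpan (l := l) hp.antitone n
    rw [hlen, elen_eq hl hp hlen] at hle
    simp only [elen_eq hl hp hlen, Nat.dvd_add_right (dvd_mul_right _ _)]
    rcases lt_or_ge (segSpan l p n) l with hlt | hge
    · rw [min_eq_left hlt.le] at hle ⊢
      rw [if_neg (Nat.not_dvd_of_pos_of_lt (by omega) hlt)]
      rcases le_or_gt l (segSpan l p n + 1) with hstart | hstart
      · obtain ⟨h1, h2⟩ := seg_succ_of_le (l := l) (p := p) (i := n) (by omega)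
        rw [h1, h2, hend, mul_add_one]
        omega
      · obtain ⟨h1, h2⟩ := seg_succ_of_lt (l := l) (p := p) (i := n) (by omega)
        rw [h1, h2]
        omega
    · obtain ⟨h1, h2⟩ := seg_succ_of_le (l := l) (p := p) (i := n) (by omega)
      rw [min_eq_right hge] at hle ⊢
      rw [if_pos dvd_rfl, h1, h2, hend, mul_add_one]
      omega

theorem mullLen_add (hl : 0 < l) (hp : IsPartition p) (hi : p i = 0) :
    mullLen l p + i = l * segIndex l p i + segSpan l p i := by
  induction i, hp.eq_zero_iff_plen_le.1 hi using Nat.le_induction with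
  | base => exact mullLen_add_plen hl hp
  | succ i hle ih =>
    have hspan := segSpan_lt hl p i
    have h0 := hp.eq_zero_iff_plen_le.2 hle
    have hprev := ih h0
    rcases le_or_gt (l + p (i + 1)) (segSpan l p i + 1) with hstart | hstart
    · rw [(seg_succ_of_le hstart).1, (seg_succ_of_le hstart).2, mul_add_one]
      omega
    · rw [(seg_succ_of_lt hstart).1, (seg_succ_of_lt hstart).2]
      omega

theorem mullLen_eq_zero (hl : 0 < l) (hp : IsPartition p) (h0 : p 0 = 0) : mullLen l p = 0 := by
  simpa [segIndex, segSpan, h0] using mullLen_add hl hp h0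

theorem mullLen_add_eq_add_mullLen_shift (hl : 0 < l) (hp : IsPartition p)
    (hle : l + p h ≤ p 0 + h) (hlt : ∀ j < h, p 0 + j < l + p j) :
    mullLen l p + h = l + mullLen l fun j => p (j + h) := by
  have hfull := mullLen_add hl hp (i := h + plen p) (hp.eq_zero_iff_plen_le.2 (by omega))
  have hshift := mullLen_add hl (hp.shift h) (i := plen p) (hp.eq_zero_iff_plen_le.2 (by omega))
  obtain ⟨hspan, hindex⟩ := seg_shift hl hle hlt (plen p)
  rw [hspan, hindex, mul_add, mul_one] at hfull
  omega

theorem mullLen_eq_truncate_add_shift (hl : 0 < l) (hp : IsPartition p) :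
    mullLen l p = mullLen l (fun i => if i < firstSeg l p then p i else 0) +
      mullLen l fun j => p (j + firstSeg l p) := by
  obtain ⟨hpos, hle⟩ := firstSeg_spec hl hp.antitone
  have hlt := lt_of_lt_firstSeg hl hp.antitone
  generalize firstSeg l p = h at *
  have hfirst := mullLen_add_eq_add_mullLen_shift hl (.truncate hp.antitone h) (h := h)
    (by rw [if_neg (lt_irrefl h), if_pos hpos]; omega)
    (fun j hj => by rw [if_pos hpos, if_pos hj]; exact hlt j hj)
  rw [mullLen_eq_zero hl ((IsPartition.truncate hp.antitone h).shift h) (by simp)] at hfirst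
  have hfull := mullLen_add_eq_add_mullLen_shift hl hp hle hlt
  omega

/-! ### Interlacing -/

theorem seg_removeLEdge_interlace (hl : 0 < l) (hp : IsPartition p) (i : ℕ) :
    (segIndex l (removeLEdge l p) i = segIndex l p i ∧
        segSpan l (removeLEdge l p) i ≤ segSpan l p i ∧
        (p i ≠ 0 → segSpan l (removeLEdge l p) i < segSpan l p i)) ∨
      (segIndex l (removeLEdge l p) i + 1 = segIndex l p i ∧
        segSpan l p i ≤ segSpan l (removeLEdge l p) i) := by
  induction i with
  | zero =>
    have hle := removeLEdge_le hl hp 0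
    refine Or.inl ⟨rfl, ?_⟩
    simp only [segSpan]
    omega
  | succ i ih =>
    have hanti := hp.antitone (Nat.le_add_right i 1)
    have happly := removeLEdge_apply hl hp i
    have hnext := removeLEdge_le hl hp (i + 1)
    have hspan_next := segSpan_le_removeLEdge hl hp (i + 1)
    have hspan := le_segSpan (l := l) hp.antitone i
    have hspan_lt := segSpan_lt hl (removeLEdge l p) i
    have hspan_le := le_segSpan (l := l) (isPartition_removeLEdge hl hp).antitone i
    rcases le_or_gt (l + p (i + 1)) (segSpan l p i + 1) with hs | hs <;>
    rcases le_or_gt (l + removeLEdge l p (i + 1)) (segSpan l (removeLEdge l p) i + 1)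
      with ht | ht
    · rw [(seg_succ_of_le hs).1, (seg_succ_of_le hs).2, (seg_succ_of_le ht).1,
        (seg_succ_of_le ht).2]
      omega
    · rw [(seg_succ_of_le hs).1, (seg_succ_of_le hs).2, (seg_succ_of_lt ht).1,
        (seg_succ_of_lt ht).2]
      omega
    · rw [(seg_succ_of_lt hs).1] at hspan_next
      rw [(seg_succ_of_lt hs).1, (seg_succ_of_lt hs).2, (seg_succ_of_le ht).1,
        (seg_succ_of_le ht).2]
      omega
    · rw [(seg_succ_of_lt hs).1, (seg_succ_of_lt hs).2, (seg_succ_of_lt ht).1,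
        (seg_succ_of_lt ht).2]
      omega

theorem mullLen_mem_Icc (hl : 0 < l) (hp : IsPartition p) :
    mullLen l p ∈ Set.Icc (mullLen l (removeLEdge l p)) (mullLen l (removeLEdge l p) + l) := by
  have hend := removeLEdge_eq_zero hl hp hp.apply_plen
  have hlen := mullLen_add hl hp hp.apply_plen
  have hlen' := mullLen_add hl (isPartition_removeLEdge hl hp) hend
  have hspan := segSpan_lt hl p (plen p)
  have hspan' := segSpan_lt hl (removeLEdge l p) (plen p)
  rw [hend] at hspan'
  rw [hp.apply_plen] at hspan
  rw [Set.mem_Icc]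
  rcases seg_removeLEdge_interlace hl hp (plen p) with ⟨hindex, hle, -⟩ | ⟨hindex, hle⟩
  · rw [hindex] at hlen'
    omega
  · rw [← hindex, mul_add_one] at hlen
    omega

/-! ### Partitions with a given partition left after removing the `l`-edge -/

/-- The partition with largest part `a` and remaining parts `p`. -/
def addRow (a : ℕ) (p : ℕ → ℕ) : ℕ → ℕ
  | 0 => a
  | i + 1 => p i

theorem addRow_head_tail (p : ℕ → ℕ) : addRow (p 0) (fun i => p (i + 1)) = p := by
  funext i
  cases i <;> rfl

theorem IsPartition.addRow {a : ℕ} (hp : IsPartition p) (ha : p 0 ≤ a) :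
    IsPartition (addRow a p) := by
  refine of_antitone (n := plen p + 1) (antitone_nat_of_succ_le fun i => ?_) hp.apply_plen
  cases i with
  | zero => exact ha
  | succ i => exact hp.antitone (Nat.le_add_right i 1)

theorem plen_addRow {a : ℕ} (hp : IsPartition p) (ha : p 0 ≤ a) (ha' : a ≠ 0) :
    plen (addRow a p) = plen p + 1 := by
  refine (hp.addRow ha).plen_eq_of hp.apply_plen fun i hi => ?_
  cases i with
  | zero => exact ha'
  | succ i => exact mt hp.eq_zero_iff_plen_le.1 (by omega)

theorem IsPartition.plen_eq_plen_tail_add_one (hp : IsPartition p) (h0 : p 0 ≠ 0) :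
    plen p = plen (fun i => p (i + 1)) + 1 := by
  rw [← plen_addRow (hp.shift 1) (hp.antitone (Nat.zero_le 1)) h0, addRow_head_tail]

/-- The first `l`-segment of `addRow a p` is the last `l` nodes of its first row. -/
theorem removeLEdge_addRow_of_le {a : ℕ} (hl : 0 < l) (hp : IsPartition p)
    (ha : l + p 0 ≤ a + 1) :
    removeLEdge l (addRow a p) = addRow (a - l) (removeLEdge l p) := by
  funext i
  rw [removeLEdge_apply hl (hp.addRow (by omega))]
  cases i with
  | zero =>
    simp only [segSpan, addRow]
    omega
  | succ i =>
    have hseg := (seg_shift (p := addRow a p) (h := 1) hl ha (fun j hj => by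
      obtain rfl : j = 0 := by omega
      omega) i).1
    rw [add_comm] at hseg
    simp only [addRow, removeLEdge_apply hl hp, hseg]

/-- The first row of `addRow (p 0 - 1) (addRow b fun i => p (i + 1))` is one shorter than that of
`p`, so that `segSpan` reaches `p 0` in the second row; from there on the segments agree. -/
theorem removeLEdge_addRow_addRow {b : ℕ} (hl : 0 < l) (hp : IsPartition p) (hb : p 1 ≤ b)
    (hb' : b < p 0) (hpb : p 0 < l + b) :
    removeLEdge l (addRow (p 0 - 1) (addRow b fun i => p (i + 1))) =
      addRow (b - 1) (removeLEdge l p) := by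
  have hq := ((hp.shift 1).addRow hb).addRow (show b ≤ p 0 - 1 by omega)
  set q := addRow (p 0 - 1) (addRow b fun i => p (i + 1))
  have hspan : segSpan l q 1 = p 0 := by
    have hsucc :=
      (seg_succ_of_lt (l := l) (p := q) (i := 0) (by simp only [segSpan, q, addRow]; omega)).1
    simp only [segSpan, q, addRow] at hsucc ⊢
    omega
  funext i
  rw [removeLEdge_apply hl hq]
  cases i with
  | zero =>
    simp only [segSpan, q, addRow]
    omega
  | succ i =>
    have hseg := (seg_add (q := p) hspan (fun j => by rw [add_comm 1 j]; rfl) i).1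
    rw [add_comm] at hseg
    simp only [q, addRow, removeLEdge_apply hl hp, hseg]

theorem isLRegular_addRow_iff {a : ℕ} (hl : 2 ≤ l) :
    IsLRegular l (addRow a p) ↔ (a ≠ 0 → p (l - 2) ≠ a) ∧ IsLRegular l p := by
  have hhead : addRow a p (0 + l - 1) = p (l - 2) :=
    congrArg (addRow a p) (show _ = l - 2 + 1 by omega)
  have htail (i : ℕ) : addRow a p (i + 1 + l - 1) = p (i + l - 1) :=
    congrArg (addRow a p) (show _ = i + l - 1 + 1 by omega)
  refine ⟨fun hr => ⟨fun ha => hhead ▸ hr 0 ha, fun i hi => htail i ▸ hr (i + 1) hi⟩, ?_⟩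
  rintro ⟨ha, hr⟩ (_ | i) hi
  · exact hhead ▸ ha hi
  · exact htail i ▸ hr i hi

/-- If rows `0, …, l - 1` of the new partition were equal, then `segSpan l p` would grow by one from
each row to the next down to row `l - 2`, leaving at least `a` nodes there. -/
theorem isLRegular_addRow_addRow {a : ℕ} (hl : 2 ≤ l) (hp : IsPartition p) (hr : IsLRegular l p)
    (ha : a + 2 ≤ p 0) (hrow : removeLEdge l p (l - 2) < a) :
    IsLRegular l (addRow (p 0 - 1) (addRow (a + 1) fun i => p (i + 1))) := by
  have hl' : 0 < l := by omega
  have hlower := sub_one_le_removeLEdge hl' hp (l - 2)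
  rw [isLRegular_addRow_iff hl, isLRegular_addRow_iff hl]
  refine ⟨fun _ heq => ?_, fun _ => by omega, hr.shift hl' 1⟩
  have hge : p 0 - 1 ≤ p (l - 2) := by
    rcases hk : l - 2 with _ | k
    · omega
    · rw [hk] at heq
      exact heq.ge
  have hspan := (seg_of_lt (l := l) (p := p) (h := l - 1) (fun j hj => by
    have hanti := hp.antitone (show j ≤ l - 2 by omega)
    omega) (l - 2) (by omega)).1
  have hupper := segSpan_le_removeLEdge hl' hp (l - 2)
  omega

/-- A first row of length `a` is left by adding to `p` a first row of length `a + l`. If `p` is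
too wide for that, the new first row has to be in the same `l`-segment as the first row of `p`, and
both are replaced by rows of lengths `p 0 - 1` and `a + 1`. -/
theorem exists_removeLEdge_eq_addRow {a : ℕ} (hl : 2 ≤ l) (hp : IsPartition p)
    (hr : IsLRegular l p) (ha : a ≠ 0) (hw : removeLEdge l p 0 ≤ a)
    (hreg : IsLRegular l (addRow a (removeLEdge l p))) :
    ∃ q, IsPartition q ∧ IsLRegular l q ∧ removeLEdge l q = addRow a (removeLEdge l p) ∧
      plen q = plen p + 1 := by
  have hl' : 0 < l := by omega
  have hupper := segSpan_le_removeLEdge hl' hp 0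
  have hlower := sub_one_le_removeLEdge hl' hp 0
  rw [segSpan] at hupper
  rw [zero_add] at hlower
  rcases le_or_gt (p 0) (a + 1) with hwide | hwide
  · refine ⟨addRow (a + l) p, hp.addRow (by omega), ?_, ?_, plen_addRow hp (by omega) (by omega)⟩
    · have hanti := hp.antitone (l - 2).zero_le
      exact (isLRegular_addRow_iff hl).2 ⟨fun _ => by omega, hr⟩
    · rw [removeLEdge_addRow_of_le hl' hp (by omega), Nat.add_sub_cancel]
  · have hrow : removeLEdge l p (l - 2) < a :=
      (((isPartition_removeLEdge hl' hp).antitone (l - 2).zero_le).trans hw).lt_of_ne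
        (((isLRegular_addRow_iff hl).1 hreg).1 ha)
    have htail := hp.shift 1
    have hsecond := htail.addRow (a := a + 1) (by rw [zero_add]; omega)
    refine ⟨_, hsecond.addRow (show a + 1 ≤ p 0 - 1 by omega),
      isLRegular_addRow_addRow hl hp hr hwide hrow,
      removeLEdge_addRow_addRow hl' hp (by omega) (by omega) (by omega), ?_⟩
    rw [plen_addRow hsecond (show a + 1 ≤ p 0 - 1 by omega) (by omega),
      plen_addRow htail (by rw [zero_add]; omega) (by omega),
      hp.plen_eq_plen_tail_add_one (by omega)]

/-- The witness of length `n > 0` is `(2, 1, …, 1)`, whose first row makes it `l`-regular even for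
`n = l`. -/
theorem exists_removeLEdge_eq_zero (hl : 2 ≤ l) (hn : n ≤ l) :
    ∃ q, IsPartition q ∧ IsLRegular l q ∧ removeLEdge l q = (fun _ => 0) ∧ plen q = n := by
  have hl' : 0 < l := by omega
  rcases n with _ | n
  · exact ⟨fun _ => 0, .zero, .zero l, funext fun i => removeLEdge_eq_zero hl' .zero rfl,
      IsPartition.zero.plen_eq_zero rfl⟩
  · have hone : IsPartition fun i => if i < n then 1 else 0 := .truncate antitone_const n
    have hle (i : ℕ) : (if i < n then 1 else 0) ≤ 1 := by split_ifs <;> omega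
    have hq := hone.addRow (a := 2) ((hle 0).trans one_le_two)
    refine ⟨_, hq, (isLRegular_addRow_iff hl).2 ⟨fun _ => ?_, fun i hi => ?_⟩, ?_, ?_⟩
    · exact ((hle (l - 2)).trans_lt one_lt_two).ne
    · exact (if_neg (by omega)).trans_ne hi.symm
    · refine (isPartition_removeLEdge hl' hq).eq_zero ?_
      rw [removeLEdge_apply hl' hq]
      simp only [segSpan, addRow]
      have hle0 := hle 0
      omega
    · rw [plen_addRow hone ((hle 0).trans one_le_two) two_ne_zero,
        hone.plen_eq_of (if_neg (lt_irrefl n)) fun i hi => by simp [hi]]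

theorem exists_removeLEdge_eq (hl : 2 ≤ l) {v : ℕ → ℕ} (hv : IsPartition v)
    (hr : IsLRegular l v) (hn : n ∈ Set.Icc (plen v) (plen v + l)) :
    ∃ q, IsPartition q ∧ IsLRegular l q ∧ removeLEdge l q = v ∧ plen q = n := by
  rw [Set.mem_Icc] at hn
  induction n generalizing v with
  | zero =>
    obtain rfl := hv.eq_zero (hv.eq_zero_iff_plen_le.2 hn.1)
    exact exists_removeLEdge_eq_zero hl l.zero_le
  | succ n ih =>
    by_cases h0 : v 0 = 0
    · obtain rfl := hv.eq_zero h0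
      rw [hv.plen_eq_zero h0] at hn
      exact exists_removeLEdge_eq_zero hl (by omega)
    · have hlen := hv.plen_eq_plen_tail_add_one h0
      obtain ⟨p, hp, hrp, hpv, hpn⟩ := ih (hv.shift 1) (hr.shift (by omega) 1) (by omega)
      obtain ⟨q, hq, hrq, hqp, hqn⟩ := exists_removeLEdge_eq_addRow hl hp hrp h0
        (by rw [hpv]; exact hv.antitone (Nat.zero_le 1)) (by rwa [hpv, addRow_head_tail])
      exact ⟨q, hq, hrq, by rw [hqp, hpv, addRow_head_tail], by omega⟩

/-! ### The Mullineux map -/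

theorem mullAux_spec (hl : 2 ≤ l) (hp : IsPartition p) (hr : IsLRegular l p) (hn : pdeg p ≤ n) :
    IsPartition (mullAux l n p) ∧ IsLRegular l (mullAux l n p) ∧
      plen (mullAux l n p) = mullLen l p := by
  have hl' : 0 < l := by omega
  induction n generalizing p with
  | zero =>
    have hdeg := pdeg_removeLEdge_add_plen_le hl' hp
    have h0 : p 0 = 0 := hp.eq_zero_iff_plen_le.2 (by omega)
    exact ⟨.zero, .zero l, by
      rw [mullLen_eq_zero hl' hp h0]; exact IsPartition.zero.plen_eq_zero rfl⟩
  | succ n ih =>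
    unfold mullAux
    split_ifs with h0
    · exact ⟨.zero, .zero l, by rw [mullLen_eq_zero hl' hp h0, IsPartition.zero.plen_eq_zero rfl]⟩
    · have hdeg := pdeg_removeLEdge_add_plen_le hl' hp
      have hpos : plen p ≠ 0 := fun hlen => h0 (hlen ▸ hp.apply_plen)
      obtain ⟨hv, hrv, hlen⟩ := ih (isPartition_removeLEdge hl' hp)
        (isLRegular_removeLEdge hl hp hr) (by omega)
      obtain ⟨hq, hrq, -, hqn⟩ := Classical.epsilon_spec
        (exists_removeLEdge_eq hl hv hrv (hlen ▸ mullLen_mem_Icc hl' hp))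
      exact ⟨hq, hrq, hqn⟩

theorem plen_mull (hl : 2 ≤ l) (hp : IsPartition p) (hr : IsLRegular l p) :
    plen (mull l p) = mullLen l p :=
  (mullAux_spec hl hp hr le_rfl).2.2

theorem sum_plen_mull_mullCompsAux (hl : 2 ≤ l) (hp : IsPartition p) (hr : IsLRegular l p)
    (hn : p n = 0) :
    ((mullCompsAux l n p).map fun c => plen (mull l c)).sum = mullLen l p := by
  have hl' : 0 < l := by omega
  induction n generalizing p with
  | zero => rw [mullLen_eq_zero hl' hp hn]; rfl
  | succ n ih =>
    unfold mullCompsAux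
    split_ifs with h0 he
    · rw [mullLen_eq_zero hl' hp h0]
      rfl
    · simp [plen_mull hl hp hr]
    · have hpos := (firstSeg_spec hl' hp.antitone).1
      have hend : p (n + firstSeg l p) = 0 := 
        Nat.eq_zero_of_le_zero (hn ▸ hp.antitone (by omega))
      rw [List.map_cons, List.sum_cons, ih (hp.shift _) (hr.shift hl' _) hend,
        plen_mull hl (.truncate hp.antitone _) (hr.truncate _),
        ← mullLen_eq_truncate_add_shift hl' hp]

end

/-- If `μ` is a nonzero `l`-regular partition with Mullineux components `μ¹, …, μᵗ`,
then `ℓ(Mull(μ)) = ℓ(Mull(μ¹)) + … + ℓ(Mull(μᵗ))`. -/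
theorem plen_mull_eq_sum_over_comps (l : ℕ) (hl : 2 ≤ l) (p : ℕ → ℕ)
    (hp : IsPartition p) (hne : p 0 ≠ 0) (hreg : IsLRegular l p) :
    plen (mull l p) = ((mullComps l p).map fun c => plen (mull l c)).sum := by
  rw [plen_mull hl hp hreg]
  exact (sum_plen_mull_mullCompsAux hl hp hreg hp.apply_plen).symm
end
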